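/- arXiv:1007.2375 — 6 statements merged into one kernel-verified Lean document; each statement's English description precedes it below -/
import Mathlib

section
/- Let t > 0 and let S be a nonnegative real random variable on a probability space with probability measure Q satisfying the tail bound Q(S ≥ x) ≤ min(1, 2·exp(−x²/(2t))) for every x ≥ 0. Then for every α ≥ 0, E_Q[exp(α·S)] ≤ exp( √(2t)·(√(log 2) + 2√π)·α + α²·t/2 ). -/
open MeasureTheory Real

/-!
By the layer-cake formula, `E[exp (α S)] = 1 + ∫₀^∞ Q(S ≥ x) α exp (α x) dx`. Inserting the bound
`2 exp (-x² / (2t))` for the tail, completing the square and enlarging the domain of integration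
to the whole line gives
`E[exp (α S)] ≤ 1 + B exp C` with `B = 2 α √(2πt)` and `C = α² t / 2`.
Since `1 + B exp C ≤ (1 + B) exp C ≤ exp (B + C)`, the claim follows; the summand involving
`√(log 2)` is nonnegative and is pure slack.
-/

/-- The Gaussian integral that dominates the layer-cake integral, after completing the square:
`α x - x² / (2t) = α² t / 2 - (x - α t)² / (2t)`. -/
lemma lintegral_gaussian_tail_mul_exp (t : ℝ) (ht : 0 < t) (α : ℝ) (hα : 0 ≤ α) :
    ∫⁻ x : ℝ, ENNReal.ofReal (2 * exp (-x ^ 2 / (2 * t)) * (α * exp (α * x))) =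
      ENNReal.ofReal (2 * α * exp (α ^ 2 * t / 2) * √(2 * t * π)) := by
  have hsq : ∀ x : ℝ, 2 * exp (-x ^ 2 / (2 * t)) * (α * exp (α * x)) =
      2 * α * exp (α ^ 2 * t / 2) * exp (-(1 / (2 * t)) * (x - α * t) ^ 2) := by
    intro x
    have h : exp (-x ^ 2 / (2 * t)) * exp (α * x) =
        exp (α ^ 2 * t / 2) * exp (-(1 / (2 * t)) * (x - α * t) ^ 2) := by
      rw [← exp_add, ← exp_add]
      congr 1
      field_simp
      ring
    linear_combination 2 * α * h
  have hint : Integrable fun x : ℝ => exp (-(1 / (2 * t)) * (x - α * t) ^ 2) :=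
    (integrable_exp_neg_mul_sq (b := 1 / (2 * t)) (by positivity)).comp_sub_right (α * t)
  simp_rw [hsq]
  rw [← ofReal_integral_eq_lintegral_ofReal (hint.const_mul _)
    (Filter.Eventually.of_forall fun x => by positivity), integral_const_mul,
    integral_sub_right_eq_self (fun x : ℝ => exp (-(1 / (2 * t)) * x ^ 2)) (α * t),
    integral_gaussian]
  congr 3
  field_simp

/-- Exponential moment bound for a single nonnegative random variable with the
Brownian-supremum tail bound. -/
theorem stmt_1
    {Ω : Type*} [MeasurableSpace Ω] (μ : Measure Ω) [IsProbabilityMeasure μ]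
    (t : ℝ) (ht : 0 < t) (S : Ω → ℝ)
    (hmeas : Measurable S) (hnonneg : ∀ ω, 0 ≤ S ω)
    (htail : ∀ x : ℝ, 0 ≤ x →
      μ {ω | x ≤ S ω} ≤ ENNReal.ofReal (min 1 (2 * Real.exp (-x ^ 2 / (2 * t)))))
    (α : ℝ) (hα : 0 ≤ α) :
    ∫ ω, Real.exp (α * S ω) ∂μ ≤
      Real.exp (Real.sqrt (2 * t) * (Real.sqrt (Real.log 2) + 2 * Real.sqrt π) * α
        + α ^ 2 * t / 2) := by
  have hcont : Continuous fun x : ℝ => α * exp (α * x) := by fun_prop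
  have hprim : ∀ s : ℝ, ∫ x in (0 : ℝ)..s, α * exp (α * x) = exp (α * s) - 1 := by
    intro s
    rw [intervalIntegral.integral_eq_sub_of_hasDerivAt (f := fun x => exp (α * x))
      (fun x _ => ?_) (hcont.intervalIntegrable _ _)]
    · simp
    · simpa [mul_comm] using ((hasDerivAt_id x).const_mul α).exp
  have hcake : ∫⁻ ω, ENNReal.ofReal (exp (α * S ω) - 1) ∂μ =
      ∫⁻ x in Set.Ioi 0, μ {ω | x ≤ S ω} * ENNReal.ofReal (α * exp (α * x)) := by
    simp_rw [← hprim]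
    exact lintegral_comp_eq_lintegral_meas_le_mul μ
      (Filter.Eventually.of_forall hnonneg) hmeas.aemeasurable
      (fun s _ => hcont.intervalIntegrable _ _)
      (Filter.Eventually.of_forall fun x => by positivity)
  have hbound : ∫⁻ ω, ENNReal.ofReal (exp (α * S ω) - 1) ∂μ ≤
      ENNReal.ofReal (2 * α * exp (α ^ 2 * t / 2) * √(2 * t * π)) := by
    rw [hcake, ← lintegral_gaussian_tail_mul_exp t ht α hα]
    refine le_trans (setLIntegral_mono' measurableSet_Ioi fun x hx => ?_)
      (setLIntegral_le_lintegral (Set.Ioi 0) _)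
    rw [ENNReal.ofReal_mul (p := 2 * exp (-x ^ 2 / (2 * t))) (by positivity)]
    exact mul_le_mul' ((htail x (le_of_lt hx)).trans
      (ENNReal.ofReal_le_ofReal (min_le_right _ _))) le_rfl
  have hsplit : ∫⁻ ω, ENNReal.ofReal (exp (α * S ω)) ∂μ =
      1 + ∫⁻ ω, ENNReal.ofReal (exp (α * S ω) - 1) ∂μ := by
    have h : ∀ ω, ENNReal.ofReal (exp (α * S ω)) =
        1 + ENNReal.ofReal (exp (α * S ω) - 1) := by
      intro ω
      have h1 : 1 ≤ exp (α * S ω) := one_le_exp (mul_nonneg hα (hnonneg ω))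
      rw [← ENNReal.ofReal_one, ← ENNReal.ofReal_add zero_le_one (by linarith)]
      congr 1
      ring
    simp_rw [h]
    rw [lintegral_add_left measurable_const]
    simp
  have hreal : 1 + 2 * α * exp (α ^ 2 * t / 2) * √(2 * t * π) ≤
      exp (√(2 * t) * (√(log 2) + 2 * √π) * α + α ^ 2 * t / 2) := by
    rw [sqrt_mul (by positivity : (0 : ℝ) ≤ 2 * t)]
    have hC : 1 ≤ exp (α ^ 2 * t / 2) := one_le_exp (by positivity)
    have hB := add_one_le_exp (√(2 * t) * (2 * √π) * α)
    calc 1 + 2 * α * exp (α ^ 2 * t / 2) * (√(2 * t) * √π)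
        ≤ (√(2 * t) * (2 * √π) * α + 1) * exp (α ^ 2 * t / 2) := by linarith
      _ ≤ exp (√(2 * t) * (2 * √π) * α) * exp (α ^ 2 * t / 2) := by gcongr
      _ = exp (√(2 * t) * (2 * √π) * α + α ^ 2 * t / 2) := (exp_add _ _).symm
      _ ≤ _ := by
        gcongr
        exact le_add_of_nonneg_left (sqrt_nonneg _)
  rw [integral_eq_lintegral_of_nonneg_ae (Filter.Eventually.of_forall fun ω => (exp_pos _).le)
    (by fun_prop)]
  refine ENNReal.toReal_le_of_le_ofReal (exp_pos _).le ?_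
  refine le_trans ?_ (ENNReal.ofReal_le_ofReal hreal)
  rw [hsplit, ENNReal.ofReal_add zero_le_one (by positivity), ENNReal.ofReal_one]
  gcongr
end

section
/- Let t > 0 and let (S_j)_{j ≥ 1} be a sequence of nonnegative real random variables on a probability space with probability measure Q, each satisfying the tail bound Q(S_j ≥ x) ≤ min(1, 2·exp(−x²/(2t))) for every x ≥ 0. Let (a_j)_{j ≥ 1} be real numbers with 0 < ∑_j |a_j| < +∞, and let p ≥ 1 be a real number. Then E_Q[ |∑_j a_j S_j|^p ] ≤ (∑_j |a_j|)^p · t^(p/2) · ( (2 log 2)^(p/2) + 2p·G(p−1) ), where G(q) := ∫₀^∞ y^q exp(−y²/2) dy. -/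
open MeasureTheory Real

/-!
Weighted Jensen gives the pointwise bound
`|∑ a_j S_j| ^ p ≤ A ^ (p - 1) * ∑ |a_j| S_j ^ p` with `A = ∑ |a_j|` (`tsum_mul_rpow_le`), so after
integrating term by term it is enough to bound each moment `E[S_j ^ p]`. The layer-cake formula and
the Gaussian tail give `E[S_j ^ p] ≤ p ∫ x ^ (p - 1) * 2 exp (-x² / (2t)) dx`, which rescales to
`t ^ (p / 2) * (2 p G(p - 1))` (`lintegral_rpow_le_of_tail`). This is already below the
claimed bound; the nonnegative term `(2 log 2) ^ (p / 2)` is slack.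
All estimates are made for `ℝ≥0∞`-valued integrals, so no integrability has to be known beforehand.
-/

/-- Weighted Jensen inequality for the convex function `x ↦ x ^ p` and an infinite family of
weights, not normalized to total mass one. -/
lemma tsum_mul_rpow_le {p : ℝ} (hp : 1 ≤ p) (w f : ℕ → ENNReal) :
    (∑' j, w j * f j) ^ p ≤ (∑' j, w j) ^ (p - 1) * ∑' j, w j * f j ^ p := by
  have hp0 : 0 < p := by linarith
  have hroot : ∑' j, w j * f j
      ≤ (∑' j, w j) ^ (1 - p⁻¹) * (∑' j, w j * f j ^ p) ^ p⁻¹ := by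
    rw [ENNReal.tsum_eq_iSup_sum]
    refine iSup_le fun s => (ENNReal.inner_le_weight_mul_Lp_of_nonneg s hp w f).trans ?_
    have h1 : 0 ≤ 1 - p⁻¹ := sub_nonneg.2 (inv_le_one_of_one_le₀ hp)
    have h2 : 0 ≤ p⁻¹ := by positivity
    exact mul_le_mul' (ENNReal.rpow_le_rpow (ENNReal.sum_le_tsum s) h1)
      (ENNReal.rpow_le_rpow (ENNReal.sum_le_tsum s) h2)
  refine (ENNReal.rpow_le_rpow hroot hp0.le).trans (le_of_eq ?_)
  rw [ENNReal.mul_rpow_of_nonneg _ _ hp0.le, ← ENNReal.rpow_mul, ← ENNReal.rpow_mul,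
    inv_mul_cancel₀ hp0.ne', ENNReal.rpow_one, sub_mul, one_mul, inv_mul_cancel₀ hp0.ne']

/-- The substitution `x = √t y`, carried out through the closed form of both integrals in terms
of the Gamma function. -/
lemma integral_rpow_mul_exp_scale {t p : ℝ} (ht : 0 < t) (hp : 1 ≤ p) :
    ∫ x in Set.Ioi (0 : ℝ), x ^ (p - 1) * Real.exp (-(1 / (2 * t)) * x ^ 2)
      = t ^ (p / 2) * ∫ y in Set.Ioi (0 : ℝ), y ^ (p - 1) * Real.exp (-y ^ 2 / 2) := by
  have hclosed : ∀ b : ℝ, 0 < b →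
      ∫ x in Set.Ioi (0 : ℝ), x ^ (p - 1) * Real.exp (-b * x ^ 2)
        = b ^ (-(p / 2)) * (1 / 2) * Real.Gamma (p / 2) := by
    intro b hb
    have h := integral_rpow_mul_exp_neg_mul_rpow (p := 2) (q := p - 1) two_pos (by linarith) hb
    simp only [Real.rpow_two, sub_add_cancel, neg_div] at h
    exact h
  have hhalf : ∫ y in Set.Ioi (0 : ℝ), y ^ (p - 1) * Real.exp (-y ^ 2 / 2)
      = (1 / 2 : ℝ) ^ (-(p / 2)) * (1 / 2) * Real.Gamma (p / 2) := by
    rw [← hclosed _ (by norm_num)]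
    congr! 4 with y
    ring
  rw [hclosed _ (by positivity), hhalf, one_div, one_div, Real.inv_rpow (by positivity),
    Real.inv_rpow (by positivity), Real.rpow_neg (by positivity), Real.rpow_neg (by positivity),
    inv_inv, inv_inv, Real.mul_rpow (by positivity) ht.le]
  ring

/-- Moment bound for a single nonnegative random variable with the Gaussian tail. -/
lemma lintegral_rpow_le_of_tail {Ω : Type*} [MeasurableSpace Ω] (μ : Measure Ω)
    {t p : ℝ} (ht : 0 < t) (hp : 1 ≤ p) {X : Ω → ℝ} (hX : Measurable X) (hX0 : ∀ ω, 0 ≤ X ω)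
    (htail : ∀ x : ℝ, 0 ≤ x →
      μ {ω | x ≤ X ω} ≤ ENNReal.ofReal (min 1 (2 * Real.exp (-x ^ 2 / (2 * t))))) :
    ∫⁻ ω, ENNReal.ofReal (X ω ^ p) ∂μ ≤ ENNReal.ofReal (t ^ (p / 2) *
      (2 * p * ∫ y in Set.Ioi (0 : ℝ), y ^ (p - 1) * Real.exp (-y ^ 2 / 2))) := by
  have hp0 : 0 < p := by linarith
  rw [lintegral_rpow_eq_lintegral_meas_le_mul μ (Filter.Eventually.of_forall hX0)
    hX.aemeasurable hp0]
  have hint := (integrableOn_rpow_mul_exp_neg_mul_sq (b := 1 / (2 * t)) (by positivity)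
    (s := p - 1) (by linarith)).const_mul 2
  have hnn : 0 ≤ᵐ[volume.restrict (Set.Ioi (0 : ℝ))]
      fun x => 2 * (x ^ (p - 1) * Real.exp (-(1 / (2 * t)) * x ^ 2)) := by
    filter_upwards [ae_restrict_mem measurableSet_Ioi] with x hx
    have : (0 : ℝ) < x := hx
    simp only [Pi.zero_apply]
    positivity
  have hle : ∫⁻ x in Set.Ioi (0 : ℝ), μ {ω | x ≤ X ω} * ENNReal.ofReal (x ^ (p - 1))
      ≤ ∫⁻ x in Set.Ioi (0 : ℝ),
        ENNReal.ofReal (2 * (x ^ (p - 1) * Real.exp (-(1 / (2 * t)) * x ^ 2))) := by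
    refine setLIntegral_mono' measurableSet_Ioi fun x hx => ?_
    have hx0 : (0 : ℝ) < x := hx
    refine (mul_le_mul_left ((htail x hx0.le).trans
      (ENNReal.ofReal_le_ofReal (min_le_right _ _))) _).trans (le_of_eq ?_)
    rw [← ENNReal.ofReal_mul (by positivity),
      show -(1 / (2 * t)) * x ^ 2 = -x ^ 2 / (2 * t) by ring]
    congr 1
    ring
  refine (mul_le_mul_right hle _).trans (le_of_eq ?_)
  rw [← ofReal_integral_eq_lintegral_ofReal hint hnn, ← ENNReal.ofReal_mul hp0.le,
    integral_const_mul, integral_rpow_mul_exp_scale ht hp]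
  congr 1
  ring

/-- Lemma 4: p-th moment bound for a weighted sum of nonnegative random variables
each satisfying the Brownian-supremum tail bound. -/
theorem stmt_3
    {Ω : Type*} [MeasurableSpace Ω] (μ : Measure Ω) [IsProbabilityMeasure μ]
    (t : ℝ) (ht : 0 < t) (S : ℕ → Ω → ℝ)
    (hmeas : ∀ j, Measurable (S j))
    (hnonneg : ∀ j ω, 0 ≤ S j ω)
    (htail : ∀ j, ∀ x : ℝ, 0 ≤ x →
      μ {ω | x ≤ S j ω} ≤ ENNReal.ofReal (min 1 (2 * Real.exp (-x ^ 2 / (2 * t)))))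
    (a : ℕ → ℝ) (ha : Summable fun j => |a j|) (hapos : 0 < ∑' j, |a j|)
    (p : ℝ) (hp : 1 ≤ p) :
    ∫ ω, |∑' j, a j * S j ω| ^ p ∂μ ≤
      (∑' j, |a j|) ^ p * t ^ (p / 2) *
        ((2 * Real.log 2) ^ (p / 2)
          + 2 * p * ∫ y in Set.Ioi (0 : ℝ), y ^ (p - 1) * Real.exp (-y ^ 2 / 2)) := by
  have hp0 : 0 < p := by linarith
  set G := ∫ y in Set.Ioi (0 : ℝ), y ^ (p - 1) * Real.exp (-y ^ 2 / 2) with hG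
  set A := ∑' j, |a j| with hA
  have hG0 : 0 ≤ G := by
    refine setIntegral_nonneg measurableSet_Ioi fun y hy => ?_
    have : (0 : ℝ) < y := hy
    positivity
  have hA' : ∑' j, ‖a j‖ₑ = ENNReal.ofReal A := by
    rw [hA, ENNReal.ofReal_tsum_of_nonneg (fun j => abs_nonneg _) ha]
    exact tsum_congr fun j => Real.enorm_eq_ofReal_abs _
  have hpow : ∀ j ω, ‖S j ω‖ₑ ^ p = ENNReal.ofReal (S j ω ^ p) := fun j ω => by
    rw [Real.enorm_of_nonneg (hnonneg j ω), ENNReal.ofReal_rpow_of_nonneg (hnonneg j ω) hp0.le]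
  -- If the series diverges at `ω`, the left side is `0`, so the bound holds at every `ω`.
  have hpoint : ∀ ω, ENNReal.ofReal (|∑' j, a j * S j ω| ^ p)
      ≤ ENNReal.ofReal A ^ (p - 1) * ∑' j, ‖a j‖ₑ * ENNReal.ofReal (S j ω ^ p) := by
    intro ω
    rw [← ENNReal.ofReal_rpow_of_nonneg (abs_nonneg _) hp0.le, ← Real.enorm_eq_ofReal_abs]
    refine (ENNReal.rpow_le_rpow enorm_tsum_le_tsum_enorm hp0.le).trans ?_
    simp only [enorm_mul, ← hpow, ← hA']
    exact tsum_mul_rpow_le hp _ _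
  have hmain : ∫⁻ ω, ENNReal.ofReal (|∑' j, a j * S j ω| ^ p) ∂μ
      ≤ ENNReal.ofReal (A ^ p * (t ^ (p / 2) * (2 * p * G))) := by
    have hm : ∀ j, Measurable fun ω => ENNReal.ofReal (S j ω ^ p) := fun j =>
      ((hmeas j).pow_const p).ennreal_ofReal
    calc ∫⁻ ω, ENNReal.ofReal (|∑' j, a j * S j ω| ^ p) ∂μ
        ≤ ∫⁻ ω, ENNReal.ofReal A ^ (p - 1) * ∑' j, ‖a j‖ₑ * ENNReal.ofReal (S j ω ^ p) ∂μ :=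
          lintegral_mono hpoint
      _ = ENNReal.ofReal A ^ (p - 1) *
            ∑' j, ‖a j‖ₑ * ∫⁻ ω, ENNReal.ofReal (S j ω ^ p) ∂μ := by
          rw [lintegral_const_mul _ (Measurable.tsum fun j => (hm j).const_mul _),
            lintegral_tsum fun j => ((hm j).const_mul _).aemeasurable]
          simp only [lintegral_const_mul _ (hm _)]
      _ ≤ ENNReal.ofReal A ^ (p - 1) *
            ∑' j, ‖a j‖ₑ * ENNReal.ofReal (t ^ (p / 2) * (2 * p * G)) := by
          gcongr with j
          exact lintegral_rpow_le_of_tail μ ht hp (hmeas j) (hnonneg j) (htail j)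
      _ = ENNReal.ofReal (A ^ p * (t ^ (p / 2) * (2 * p * G))) := by
          rw [ENNReal.tsum_mul_right, hA', ← mul_assoc, ENNReal.ofReal_rpow_of_pos hapos,
            ← ENNReal.ofReal_mul (by positivity), ← Real.rpow_add_one hapos.ne', sub_add_cancel,
            ← ENNReal.ofReal_mul (by positivity)]
  have hlog : 0 ≤ (2 * Real.log 2) ^ (p / 2) :=
    Real.rpow_nonneg (mul_nonneg two_pos.le (Real.log_nonneg one_le_two)) _
  have hreal : ∫ ω, |∑' j, a j * S j ω| ^ p ∂μ ≤ A ^ p * (t ^ (p / 2) * (2 * p * G)) := by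
    by_cases hi : Integrable (fun ω => |∑' j, a j * S j ω| ^ p) μ
    · rw [← ofReal_integral_eq_lintegral_ofReal hi
        (Filter.Eventually.of_forall fun ω => by positivity)] at hmain
      exact (ENNReal.ofReal_le_ofReal_iff (by positivity)).1 hmain
    · rw [integral_undef hi]
      positivity
  refine hreal.trans ?_
  rw [← mul_assoc (A ^ p)]
  gcongr
  exact le_add_of_nonneg_left hlog
end

section
/- Let p ≥ 1 be an integer, K ≥ 0, s > 0, and for each j ∈ {1, …, p} let φ_j : ℝ^p → ℝ be measurable with |φ_j(y)| ≤ K·( 2|y_j| + ∑_{k ≠ j} |y_k| ) for all y ∈ ℝ^p. Then for every x ∈ ℝ^p, ∑_{j=1}^p ∫₀^s ∫_{ℝ^p} (|x_j − y_j| / r) · (2πr)^(−p/2) · exp(−‖x − y‖²/(2r)) · |φ_j(y)| dy dr ≤ (2√2·(p+1)/√π) · K · (∑_{j=1}^p |x_j|) · √s + 2p·K·(1 + (p−1)/π)·s. -/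
/-!
Write `g_r` for the centred Gaussian density of variance `r` on `ℝ`. The heat kernel on `ℝ^p` is
the product of the `g_r(x_k - y_k)`, so integrating a monomial in the `|x_k - y_k|` against it
gives a product of one-dimensional absolute moments (`heat_weighted`), namely
`∫ g_r = 1`, `∫ |t| g_r = √(2/π) √r`, `∫ t² g_r = r`.

By the growth hypothesis and `|y_k| ≤ |x_k| + |x_k - y_k|`, the inner integral for the index `j`
is at most
`K (√(2/π) r^(-1/2) (2|x_j| + ∑_{k≠j} |x_k|) + 2 + (p-1) 2/π)` (`inner_bound`).
Integrating over `r ∈ (0, s)` with `∫₀^s r^(-1/2) dr = 2√s` and summing over `j`, where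
`∑_j (2|x_j| + ∑_{k≠j} |x_k|) = (p+1) ∑_j |x_j|`, gives exactly the right-hand side.
-/

open MeasureTheory Real intervalIntegral

/-- The `n`-th absolute moment of the centred Gaussian law of variance `r`, in the closed form
given by the Gamma integral. -/
noncomputable def absMoment (r : ℝ) (n : ℕ) : ℝ :=
  (2 * π * r) ^ (-(1 : ℝ) / 2) *
    ((1 / (2 * r)) ^ (-((n : ℝ) + 1) / 2) * Real.Gamma (((n : ℝ) + 1) / 2))

lemma integral_abs_pow_gaussian (r : ℝ) (hr : 0 < r) (n : ℕ) :
    ∫ t : ℝ, |t| ^ n * ((2 * π * r) ^ (-(1 : ℝ) / 2) * Real.exp (-t ^ 2 / (2 * r))) =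
      absMoment r n := by
  have h1 := integral_comp_abs (f := fun t : ℝ => t ^ n * Real.exp (-t ^ 2 / (2 * r)))
  have h2 := _root_.integral_rpow_mul_exp_neg_mul_rpow (p := 2) (q := n) (b := 1 / (2 * r))
    (by norm_num) (by have : (0:ℝ) ≤ n := n.cast_nonneg
                      linarith) (by positivity)
  have h3 : ∫ t in Set.Ioi (0:ℝ), t ^ n * Real.exp (-t ^ 2 / (2 * r)) =
      ∫ t in Set.Ioi (0:ℝ), t ^ (n:ℝ) * Real.exp (-(1 / (2 * r)) * t ^ (2:ℝ)) := by
    congr 1; ext t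
    rw [Real.rpow_natCast, Real.rpow_two]; congr 2; ring
  rw [h3, h2] at h1
  simp only [sq_abs] at h1
  simp only [mul_left_comm (_ ^ n)]
  rw [MeasureTheory.integral_const_mul, h1, absMoment]
  ring

lemma absMoment_pos (r : ℝ) (hr : 0 < r) (n : ℕ) : 0 < absMoment r n := by
  have : 0 < Real.Gamma (((n : ℝ) + 1) / 2) := Real.Gamma_pos_of_pos (by positivity)
  unfold absMoment
  positivity

lemma absMoment_zero (r : ℝ) (hr : 0 < r) : absMoment r 0 = 1 := by
  have e : (1 / (2 * r)) ^ (-(((0:ℕ) : ℝ) + 1) / 2) = √(2 * r) := by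
    rw [Real.sqrt_eq_rpow, one_div, Real.inv_rpow (by positivity),
      ← Real.rpow_neg (by positivity)]
    norm_num
  have e2 : (2 * π * r) ^ (-(1 : ℝ) / 2) = (√(2 * r) * √π)⁻¹ := by
    rw [← Real.sqrt_mul (by positivity), Real.sqrt_eq_rpow, ← Real.rpow_neg (by positivity)]
    congr 1 <;> ring
  unfold absMoment
  rw [e, e2]
  norm_num [Real.Gamma_one_half_eq]
  have := Real.sqrt_pos.2 hr
  have := Real.sqrt_pos.2 Real.pi_pos
  field_simp

lemma absMoment_one (r : ℝ) (hr : 0 < r) : absMoment r 1 = √2 / √π * √r := by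
  have e : (1 / (2 * r)) ^ (-(((1:ℕ) : ℝ) + 1) / 2) = 2 * r := by
    norm_num [Real.rpow_neg_one]
  have e2 : (2 * π * r) ^ (-(1 : ℝ) / 2) = (√2 * √π * √r)⁻¹ := by
    rw [← Real.sqrt_mul (by positivity), ← Real.sqrt_mul (by positivity), Real.sqrt_eq_rpow,
      ← Real.rpow_neg (by positivity)]
    congr 1; ring
  unfold absMoment
  rw [e, e2]
  norm_num
  have := Real.sqrt_pos.2 hr
  have := Real.sqrt_pos.2 Real.pi_pos
  have h2 : √2 ^ 2 = (2:ℝ) := Real.sq_sqrt (by norm_num)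
  have h3 : √r ^ 2 = r := Real.sq_sqrt hr.le
  field_simp
  rw [h2, h3, mul_comm]

lemma absMoment_two (r : ℝ) (hr : 0 < r) : absMoment r 2 = r := by
  have h0 := absMoment_zero r hr
  unfold absMoment at h0 ⊢
  have e : (1 / (2 * r)) ^ (-(((2:ℕ) : ℝ) + 1) / 2) =
      (1 / (2 * r)) ^ (-(((0:ℕ) : ℝ) + 1) / 2) * (2 * r) := by
    rw [show (-(((2:ℕ) : ℝ) + 1) / 2) = -(((0:ℕ) : ℝ) + 1) / 2 + (-1) by norm_num,
      Real.rpow_add (by positivity), Real.rpow_neg_one]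
    simp
  have e2 : Real.Gamma ((((2:ℕ) : ℝ) + 1) / 2) = 1 / 2 * Real.Gamma ((((0:ℕ) : ℝ) + 1) / 2) := by
    rw [show ((((2:ℕ) : ℝ) + 1) / 2) = 1 / 2 + 1 by norm_num, Real.Gamma_add_one (by norm_num)]
    norm_num
  rw [e, e2]
  linear_combination r * h0

/-- Absolute moments of the heat kernel on `ℝ^p` factor into one-dimensional ones. -/
lemma heat_weighted {p : ℕ} (x : Fin p → ℝ) (r : ℝ) (hr : 0 < r) (n : Fin p → ℕ) :
    Integrable (fun y : Fin p → ℝ => (∏ i, |x i - y i| ^ n i) *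
      ((2 * π * r) ^ (-(p : ℝ) / 2) * Real.exp (-(∑ k, (x k - y k) ^ 2) / (2 * r)))) ∧
    ∫ y : Fin p → ℝ, (∏ i, |x i - y i| ^ n i) *
      ((2 * π * r) ^ (-(p : ℝ) / 2) * Real.exp (-(∑ k, (x k - y k) ^ 2) / (2 * r))) =
      ∏ i, absMoment r (n i) := by
  let f : Fin p → ℝ → ℝ := fun i t => |x i - t| ^ n i *
    ((2 * π * r) ^ (-(1 : ℝ) / 2) * Real.exp (-(x i - t) ^ 2 / (2 * r)))
  have key : (fun y : Fin p → ℝ => (∏ i, |x i - y i| ^ n i) *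
      ((2 * π * r) ^ (-(p : ℝ) / 2) * Real.exp (-(∑ k, (x k - y k) ^ 2) / (2 * r)))) =
      fun y => ∏ i, f i (y i) := by
    ext y
    simp only [f, Finset.prod_mul_distrib, ← Real.exp_sum, Finset.prod_const, Finset.card_univ,
      Fintype.card_fin]
    rw [← Real.rpow_natCast, ← Real.rpow_mul (by positivity), ← Finset.sum_div,
      Finset.sum_neg_distrib]
    congr 3; ring
  have hf : ∀ i, ∫ t, f i t = absMoment r (n i) := fun i => by
    rw [← integral_abs_pow_gaussian r hr (n i)]
    exact integral_sub_left_eq_self (fun t : ℝ => |t| ^ n i *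
      ((2 * π * r) ^ (-(1 : ℝ) / 2) * Real.exp (-t ^ 2 / (2 * r)))) volume (x i)
  -- A Bochner integral of a non-integrable function is `0`, so a positive value gives integrability.
  have hfi : ∀ i, Integrable (f i) := fun i =>
    .of_integral_ne_zero (by rw [hf i]; exact (absMoment_pos r hr _).ne')
  rw [key]
  refine ⟨Integrable.fintype_prod hfi, ?_⟩
  rw [volume_pi, integral_fintype_prod_eq_prod]
  exact Finset.prod_congr rfl fun i _ => hf i

lemma heat_single {p : ℕ} (x : Fin p → ℝ) (r : ℝ) (hr : 0 < r) (j : Fin p) (m : ℕ) :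
    Integrable (fun y : Fin p → ℝ => |x j - y j| ^ m *
      ((2 * π * r) ^ (-(p : ℝ) / 2) * Real.exp (-(∑ k, (x k - y k) ^ 2) / (2 * r)))) ∧
    ∫ y : Fin p → ℝ, |x j - y j| ^ m *
      ((2 * π * r) ^ (-(p : ℝ) / 2) * Real.exp (-(∑ k, (x k - y k) ^ 2) / (2 * r))) =
      absMoment r m := by
  have h := heat_weighted x r hr (Pi.single j m)
  have e1 : ∀ y : Fin p → ℝ,
      ∏ i, |x i - y i| ^ (Pi.single j m : Fin p → ℕ) i = |x j - y j| ^ m := fun y => by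
    rw [Fintype.prod_eq_single j fun i hi => by rw [Pi.single_eq_of_ne hi, pow_zero],
      Pi.single_eq_same]
  have e2 : ∏ i, absMoment r ((Pi.single j m : Fin p → ℕ) i) = absMoment r m := by
    rw [Fintype.prod_eq_single j fun i hi => by rw [Pi.single_eq_of_ne hi, absMoment_zero r hr],
      Pi.single_eq_same]
  simpa only [e1, e2] using h

lemma heat_pair {p : ℕ} (x : Fin p → ℝ) (r : ℝ) (hr : 0 < r) (j k : Fin p) (hjk : j ≠ k) :
    Integrable (fun y : Fin p → ℝ => |x j - y j| * |x k - y k| *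
      ((2 * π * r) ^ (-(p : ℝ) / 2) * Real.exp (-(∑ k, (x k - y k) ^ 2) / (2 * r)))) ∧
    ∫ y : Fin p → ℝ, |x j - y j| * |x k - y k| *
      ((2 * π * r) ^ (-(p : ℝ) / 2) * Real.exp (-(∑ k, (x k - y k) ^ 2) / (2 * r))) =
      absMoment r 1 * absMoment r 1 := by
  have h := heat_weighted x r hr (fun i => if i = j ∨ i = k then 1 else 0)
  have e1 : ∀ y : Fin p → ℝ, ∏ i, |x i - y i| ^ (if i = j ∨ i = k then 1 else 0) =
      |x j - y j| * |x k - y k| := fun y => by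
    rw [Fintype.prod_eq_mul j k hjk fun i hi => by simp [hi.1, hi.2]]
    simp
  have e2 : ∏ i, absMoment r (if i = j ∨ i = k then 1 else 0) =
      absMoment r 1 * absMoment r 1 := by
    rw [Fintype.prod_eq_mul j k hjk fun i hi => by simp [hi.1, hi.2, absMoment_zero r hr]]
    simp
  simpa only [e1, e2] using h

/-- Pointwise-in-time bound: the part growing with `x` is of order `r^(-1/2)`, while the `1/r` in
front of the second-order moments cancels their factor `r`. -/
lemma inner_bound {p : ℕ} (K : ℝ) (hK : 0 ≤ K) (r : ℝ) (hr : 0 < r)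
    (j : Fin p) (ψ : (Fin p → ℝ) → ℝ)
    (hψ : ∀ y : Fin p → ℝ, |ψ y| ≤ K * (2 * |y j| + ∑ k ∈ Finset.univ.erase j, |y k|))
    (x : Fin p → ℝ) :
    ∫ y : Fin p → ℝ, (|x j - y j| / r) * (2 * π * r) ^ (-(p : ℝ) / 2) *
          Real.exp (-(∑ k, (x k - y k) ^ 2) / (2 * r)) * |ψ y| ≤
      K * (√2 / √π * (2 * |x j| + ∑ k ∈ Finset.univ.erase j, |x k|)) * r ^ (-(1 : ℝ) / 2) +
        K * (2 + ((p : ℝ) - 1) * (2 / π)) := by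
  set G : (Fin p → ℝ) → ℝ := fun y =>
    (2 * π * r) ^ (-(p : ℝ) / 2) * Real.exp (-(∑ k, (x k - y k) ^ 2) / (2 * r)) with hG
  have hGnn : ∀ y, 0 ≤ G y := fun y => by simp only [hG]; positivity
  have h1 := heat_single x r hr j 1
  have h2 := heat_single x r hr j 2
  have hp := fun k hk => heat_pair x r hr j k hk
  simp only [pow_one] at h1
  change Integrable (fun y => |x j - y j| * G y) ∧ ∫ y, |x j - y j| * G y = _ at h1
  change Integrable (fun y => |x j - y j| ^ 2 * G y) ∧ ∫ y, |x j - y j| ^ 2 * G y = _ at h2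
  change ∀ k, j ≠ k → Integrable (fun y => |x j - y j| * |x k - y k| * G y) ∧
    ∫ y, |x j - y j| * |x k - y k| * G y = _ at hp
  set S : ℝ := 2 * |x j| + ∑ k ∈ Finset.univ.erase j, |x k| with hS
  let H : (Fin p → ℝ) → ℝ := fun y =>
    K / r * (S * (|x j - y j| * G y) + 2 * (|x j - y j| ^ 2 * G y) +
      ∑ k ∈ Finset.univ.erase j, |x j - y j| * |x k - y k| * G y)
  have hne : ∀ k ∈ Finset.univ.erase j, j ≠ k := fun k hk => (Finset.ne_of_mem_erase hk).symm
  have i3 : Integrable (fun y => ∑ k ∈ Finset.univ.erase j, |x j - y j| * |x k - y k| * G y) :=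
    integrable_finsetSum _ fun k hk => (hp k (hne k hk)).1
  have i1 : Integrable (fun y => S * (|x j - y j| * G y)) := h1.1.const_mul _
  have i2 : Integrable (fun y => 2 * (|x j - y j| ^ 2 * G y)) := h2.1.const_mul _
  have i12 : Integrable (fun y => S * (|x j - y j| * G y) + 2 * (|x j - y j| ^ 2 * G y)) :=
    i1.add i2
  have hHi : Integrable H := (i12.add i3).const_mul _
  have hle : ∀ y, (|x j - y j| / r) * (2 * π * r) ^ (-(p : ℝ) / 2) *
          Real.exp (-(∑ k, (x k - y k) ^ 2) / (2 * r)) * |ψ y| ≤ H y := fun y => by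
    have tri : ∀ k, |y k| ≤ |x k| + |x k - y k| := fun k => by
      have := abs_sub (x k) (x k - y k)
      simpa using this
    have b : |ψ y| ≤ K * (S + 2 * |x j - y j| + ∑ k ∈ Finset.univ.erase j, |x k - y k|) := by
      refine (hψ y).trans (mul_le_mul_of_nonneg_left ?_ hK)
      have := Finset.sum_le_sum (s := Finset.univ.erase j) fun k _ => tri k
      rw [Finset.sum_add_distrib] at this
      have := tri j
      linarith
    calc _ = (|x j - y j| / r * G y) * |ψ y| := by simp only [hG]; ring
      _ ≤ (|x j - y j| / r * G y) *
          (K * (S + 2 * |x j - y j| + ∑ k ∈ Finset.univ.erase j, |x k - y k|)) :=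
        mul_le_mul_of_nonneg_left b (mul_nonneg (by positivity) (hGnn y))
      _ = H y := by
        simp only [H, ← Finset.sum_mul, ← Finset.mul_sum]
        ring
  have hcard : ((Finset.univ.erase j).card : ℝ) = (p : ℝ) - 1 := by
    rw [Finset.card_erase_of_mem (Finset.mem_univ j), Finset.card_univ, Fintype.card_fin,
      Nat.cast_sub (by have := j.2; omega), Nat.cast_one]
  have hHint : ∫ y, H y = K / r * (S * absMoment r 1 + 2 * absMoment r 2 +
      ((p : ℝ) - 1) * (absMoment r 1 * absMoment r 1)) := by
    simp only [H]
    rw [MeasureTheory.integral_const_mul, integral_add i12 i3, integral_add i1 i2,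
      MeasureTheory.integral_const_mul, MeasureTheory.integral_const_mul, h1.2, h2.2,
      integral_finsetSum _ fun k hk => (hp k (hne k hk)).1,
      Finset.sum_congr rfl fun k hk => (hp k (hne k hk)).2, Finset.sum_const, nsmul_eq_mul, hcard]
  refine (integral_mono_of_nonneg (.of_forall fun y => by dsimp only [Pi.zero_apply]; positivity)
    hHi (.of_forall hle)).trans (le_of_eq ?_)
  have e : r ^ (-(1 : ℝ) / 2) = (√r)⁻¹ := by
    rw [Real.sqrt_eq_rpow, ← Real.rpow_neg hr.le]; congr 1; ring
  rw [hHint, absMoment_one r hr, absMoment_two r hr, e]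
  have a1 := Real.sqrt_pos.2 hr
  have a2 := Real.sqrt_pos.2 Real.pi_pos
  have a3 : √2 / √π * √r * (√2 / √π * √r) = 2 / π * r := by
    rw [show √2 / √π * √r * (√2 / √π * √r) = √2 ^ 2 / √π ^ 2 * √r ^ 2 by ring,
      Real.sq_sqrt (by norm_num), Real.sq_sqrt Real.pi_pos.le, Real.sq_sqrt hr.le]
  have a4 : √r / r = (√r)⁻¹ := by rw [Real.sqrt_div_self', one_div]
  have a5 : r / r = 1 := div_self hr.ne'
  rw [a3]
  linear_combination K * S * (√2 / √π) * a4 + K * (2 + (p - 1) * (2 / π)) * a5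

/-- Bound for the time-integrated gradient-kernel terms against functions of
linear growth. -/
theorem stmt_10 (p : ℕ) (hp : 1 ≤ p) (K : ℝ) (hK : 0 ≤ K) (s : ℝ) (hs : 0 < s)
    (φ : Fin p → (Fin p → ℝ) → ℝ) (hφm : ∀ j, Measurable (φ j))
    (hφ : ∀ j, ∀ y : Fin p → ℝ,
      |φ j y| ≤ K * (2 * |y j| + ∑ k ∈ Finset.univ.erase j, |y k|))
    (x : Fin p → ℝ) :
    ∑ j, ∫ r in (0 : ℝ)..s, ∫ y : Fin p → ℝ,
        (|x j - y j| / r) * (2 * π * r) ^ (-(p : ℝ) / 2) *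
          Real.exp (-(∑ k, (x k - y k) ^ 2) / (2 * r)) * |φ j y| ≤
      (2 * Real.sqrt 2 * ((p : ℝ) + 1) / Real.sqrt π) * K * (∑ j, |x j|) * Real.sqrt s
        + 2 * p * K * (1 + ((p : ℝ) - 1) / π) * s := by
  have step : ∀ j, ∫ r in (0 : ℝ)..s, ∫ y : Fin p → ℝ,
        (|x j - y j| / r) * (2 * π * r) ^ (-(p : ℝ) / 2) *
          Real.exp (-(∑ k, (x k - y k) ^ 2) / (2 * r)) * |φ j y| ≤
      K * (√2 / √π * (2 * |x j| + ∑ k ∈ Finset.univ.erase j, |x k|)) * (2 * √s) +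
        K * (2 + ((p : ℝ) - 1) * (2 / π)) * s := fun j => by
    set A := K * (√2 / √π * (2 * |x j| + ∑ k ∈ Finset.univ.erase j, |x k|))
    set B := K * (2 + ((p : ℝ) - 1) * (2 / π))
    have ir : IntervalIntegrable (fun r : ℝ => A * r ^ (-(1 : ℝ) / 2)) volume 0 s :=
      (intervalIntegral.intervalIntegrable_rpow' (by norm_num)).const_mul A
    have ib : IntervalIntegrable (fun _ : ℝ => B) volume 0 s := intervalIntegrable_const
    have hval : ∫ r in (0:ℝ)..s, (A * r ^ (-(1 : ℝ) / 2) + B) = A * (2 * √s) + B * s := by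
      rw [intervalIntegral.integral_add ir ib, intervalIntegral.integral_const_mul,
        integral_rpow (.inl (by norm_num)), intervalIntegral.integral_const,
        show (-(1 : ℝ) / 2 + 1) = 1 / 2 by norm_num, ← Real.sqrt_eq_rpow,
        Real.zero_rpow (by norm_num), smul_eq_mul]
      ring
    rw [← hval, intervalIntegral.integral_of_le hs.le, intervalIntegral.integral_of_le hs.le]
    -- The integrand is nonnegative, so only the majorant has to be integrable in `r`.
    refine integral_mono_of_nonneg ?_ (ir.add ib).1 ?_
    · refine (ae_restrict_iff' measurableSet_Ioc).2 (.of_forall fun r hr => ?_)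
      have := hr.1
      exact integral_nonneg fun y => by dsimp only [Pi.zero_apply]; positivity
    · refine (ae_restrict_iff' measurableSet_Ioc).2 (.of_forall fun r hr => ?_)
      exact inner_bound K hK r hr.1 j (φ j) (hφ j) x
  refine (Finset.sum_le_sum fun j _ => step j).trans (le_of_eq ?_)
  have er : ∀ j, 2 * |x j| + ∑ k ∈ Finset.univ.erase j, |x k| = |x j| + ∑ k, |x k| := fun j => by
    rw [← Finset.add_sum_erase _ _ (Finset.mem_univ j)]; ring
  simp only [er]
  rw [Finset.sum_add_distrib, ← Finset.sum_mul, ← Finset.mul_sum, ← Finset.mul_sum,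
    Finset.sum_add_distrib]
  simp only [Finset.sum_const, Finset.card_univ, Fintype.card_fin, nsmul_eq_mul]
  ring
end

section
/- Let p ≥ 1 be an integer and let φ : ℝ^p → ℝ be twice continuously differentiable such that φ and all of its first and second order partial derivatives are bounded on ℝ^p. Then for every s > 0 and every x ∈ ℝ^p, ∫_{ℝ^p} (2πs)^(−p/2)·exp(−‖x − y‖²/(2s))·φ(y) dy − φ(x) = ∫₀^s ∫_{ℝ^p} (2πr)^(−p/2)·exp(−‖x − y‖²/(2r)) · (½·Δφ)(y) dy dr, where Δφ = ∑_{j=1}^p ∂²φ/∂y_j² is the Laplacian of φ. -/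
/-!
After the substitution `y = x + √r z`, the semigroup reads `P_r φ(x) = G(√r)`, where
`G(t) = ∫ γ(z) φ(x + t z) dz` and `γ` is the standard Gaussian density. The function `G` is
differentiable on all of `ℝ` (differentiation under the integral sign), and Gaussian integration by
parts turns `G'(t) = ∫ γ(z) Dφ(x + t z) z dz` into `t ∫ γ(z) Δφ(x + t z) dz`. The chain rule
applied to `G(√r)` cancels the singularity: for `r > 0` its derivative is
`½ ∫ γ(z) Δφ(x + √r z) dz = P_r(½Δφ)(x)`, which extends continuously to `r = 0`. The fundamental
theorem of calculus on `[0, s]` concludes, with `G(0) = φ(x)` since `γ` has total mass one.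
-/

open MeasureTheory Real intervalIntegral

/-- The standard Gaussian density on `ℝ^p`. The squared Euclidean norm is spelled out as a sum of
squares because `Fin p → ℝ` carries the sup norm. -/
noncomputable def stdGauss (p : ℕ) (z : Fin p → ℝ) : ℝ :=
  (2 * π) ^ (-(p : ℝ) / 2) * Real.exp (-(∑ j, z j ^ 2) / 2)

lemma stdGauss_nonneg (p : ℕ) (z : Fin p → ℝ) : 0 ≤ stdGauss p z := by
  unfold stdGauss; positivity

lemma contDiff_stdGauss (p : ℕ) : ContDiff ℝ 1 (stdGauss p) := by
  unfold stdGauss; fun_prop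

lemma continuous_stdGauss (p : ℕ) : Continuous (stdGauss p) := (contDiff_stdGauss p).continuous

lemma exp_neg_sum_sq (p : ℕ) (b : ℝ) (z : Fin p → ℝ) :
    Real.exp (-b * ∑ j, z j ^ 2) = ∏ j, Real.exp (-b * z j ^ 2) := by
  rw [← Real.exp_sum, Finset.mul_sum]

lemma integrable_exp_neg_sum_sq (p : ℕ) {b : ℝ} (hb : 0 < b) :
    Integrable (fun z : Fin p → ℝ => Real.exp (-b * ∑ j, z j ^ 2)) := by
  simp_rw [exp_neg_sum_sq]
  exact Integrable.fintype_prod (f := fun _ t => Real.exp (-b * t ^ 2))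
    (fun _ => integrable_exp_neg_mul_sq hb)

lemma integrable_stdGauss (p : ℕ) : Integrable (stdGauss p) := by
  unfold stdGauss
  refine Integrable.const_mul ?_ _
  convert integrable_exp_neg_sum_sq p (b := 1 / 2) (by norm_num) using 3
  ring

lemma integral_stdGauss (p : ℕ) : ∫ z, stdGauss p z = 1 := by
  unfold stdGauss
  have h : ∀ z : Fin p → ℝ, Real.exp (-(∑ j, z j ^ 2) / 2)
      = ∏ j, Real.exp (-(1 / 2) * z j ^ 2) := fun z => by
    rw [← exp_neg_sum_sq]; congr 1; ring
  simp_rw [MeasureTheory.integral_const_mul, h]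
  rw [integral_fintype_prod_volume_eq_pow (fun t : ℝ => Real.exp (-(1 / 2) * t ^ 2)),
    integral_gaussian, Fintype.card_fin, Real.sqrt_eq_rpow, ← Real.rpow_natCast,
    ← Real.rpow_mul (by positivity), show π / (1 / 2) = 2 * π by ring,
    ← Real.rpow_add (by positivity)]
  rw [show -(p : ℝ) / 2 + 1 / 2 * p = 0 by ring, Real.rpow_zero]

lemma norm_sq_le_sum_sq {p : ℕ} (z : Fin p → ℝ) : ‖z‖ ^ 2 ≤ ∑ j, z j ^ 2 := by
  rw [← Real.le_sqrt (norm_nonneg _) (Finset.sum_nonneg fun _ _ => sq_nonneg _)]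
  refine (pi_norm_le_iff_of_nonneg (Real.sqrt_nonneg _)).2 fun j => ?_
  rw [Real.norm_eq_abs]
  apply Real.abs_le_sqrt
  exact Finset.single_le_sum (f := fun j => z j ^ 2) (fun _ _ => sq_nonneg _) (Finset.mem_univ j)

lemma integrable_stdGauss_mul_norm (p : ℕ) :
    Integrable (fun z => stdGauss p z * ‖z‖) := by
  refine ((integrable_exp_neg_sum_sq p (b := 1 / 4) (by norm_num)).const_mul
    ((2 * π) ^ (-(p : ℝ) / 2))).mono'
    ((continuous_stdGauss p).mul continuous_norm).aestronglyMeasurable (.of_forall fun z => ?_)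
  rw [Real.norm_of_nonneg (mul_nonneg (stdGauss_nonneg p z) (norm_nonneg z))]
  unfold stdGauss
  rw [mul_assoc]
  refine mul_le_mul_of_nonneg_left ?_ (by positivity)
  -- `‖z‖ ≤ 1 + ‖z‖² / 4 ≤ exp (|z|² / 4)`, which costs half of the Gaussian decay
  have h1 : ‖z‖ ≤ Real.exp ((∑ j, z j ^ 2) / 4) := by
    have := Real.add_one_le_exp ((∑ j, z j ^ 2) / 4)
    nlinarith [norm_sq_le_sum_sq z, sq_nonneg (‖z‖ - 2)]
  calc Real.exp (-(∑ j, z j ^ 2) / 2) * ‖z‖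
      ≤ Real.exp (-(∑ j, z j ^ 2) / 2) * Real.exp ((∑ j, z j ^ 2) / 4) := by gcongr
    _ = _ := by rw [← Real.exp_add]; congr 1; ring

lemma fderiv_stdGauss (p : ℕ) (z : Fin p → ℝ) (j : Fin p) :
    fderiv ℝ (stdGauss p) z (Pi.single j 1) = -(z j * stdGauss p z) := by
  have h : HasFDerivAt (fun z : Fin p → ℝ => ∑ i, z i ^ 2)
      (∑ i, (2 * z i) • (ContinuousLinearMap.proj i : (Fin p → ℝ) →L[ℝ] ℝ)) z := by
    refine HasFDerivAt.fun_sum fun i _ => ?_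
    simpa using (hasFDerivAt_apply (𝕜 := ℝ) i z).pow 2
  have h2 := (((h.neg.mul_const (1 / 2 : ℝ)).exp).const_mul ((2 * π) ^ (-(p : ℝ) / 2)))
  have h3 : stdGauss p = fun y => (2 * π) ^ (-(p : ℝ) / 2) *
      Real.exp ((-fun z : Fin p → ℝ => ∑ i, z i ^ 2) y * (1 / 2)) := by
    ext z; simp [stdGauss, div_eq_mul_inv]
  rw [h3, h2.fderiv]
  simp [Pi.single_apply, div_eq_mul_inv]
  ring

/-- Gaussian integration by parts (Stein's identity) for `C¹` functions that are bounded together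
with their `j`-th partial derivative. -/
lemma gauss_ibp (p : ℕ) (j : Fin p) (ψ : (Fin p → ℝ) → ℝ) (hψ : ContDiff ℝ 1 ψ)
    (C D : ℝ) (hC : ∀ z, |ψ z| ≤ C) (hD : ∀ z, |fderiv ℝ ψ z (Pi.single j 1)| ≤ D) :
    Integrable (fun z => stdGauss p z * (z j * ψ z)) ∧
    ∫ z, stdGauss p z * (z j * ψ z) = ∫ z, stdGauss p z * fderiv ℝ ψ z (Pi.single j 1) := by
  have hc : Continuous fun z => fderiv ℝ ψ z (Pi.single j 1) :=
    (hψ.continuous_fderiv (by norm_num)).clm_apply continuous_const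
  have hg := continuous_stdGauss p
  have i1 : Integrable (fun z => stdGauss p z * (z j * ψ z)) := by
    refine ((integrable_stdGauss_mul_norm p).mul_const C).mono'
      (hg.mul ((continuous_apply j).mul hψ.continuous)).aestronglyMeasurable
      (.of_forall fun z => ?_)
    rw [norm_mul, norm_mul, Real.norm_of_nonneg (stdGauss_nonneg p z), mul_assoc]
    exact mul_le_mul_of_nonneg_left
      (mul_le_mul (norm_le_pi_norm z j) (hC z) (norm_nonneg _) (norm_nonneg _))
      (stdGauss_nonneg p z)
  have i2 : Integrable (fun z => stdGauss p z * fderiv ℝ ψ z (Pi.single j 1)) :=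
    (integrable_stdGauss p).mul_bdd hc.aestronglyMeasurable (.of_forall hD)
  have i3 : Integrable (fun z => stdGauss p z * ψ z) :=
    (integrable_stdGauss p).mul_bdd hψ.continuous.aestronglyMeasurable (.of_forall hC)
  refine ⟨i1, ?_⟩
  have e : ∀ z, fderiv ℝ (stdGauss p) z (Pi.single j 1) * ψ z
      = -(stdGauss p z * (z j * ψ z)) := fun z => by rw [fderiv_stdGauss]; ring
  rw [integral_mul_fderiv_eq_neg_fderiv_mul_of_integrable (μ := volume) (f := stdGauss p)
    (by simp_rw [e]; exact i1.neg) i2 i3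
    (fun z _ => (contDiff_stdGauss p).differentiable (by norm_num) z)
    (fun z _ => hψ.differentiable (by norm_num) z)]
  simp_rw [e, MeasureTheory.integral_neg, neg_neg]

/-- The substitution `y = x + √r z` in a heat-kernel integral. -/
lemma heat_eq_stdGauss (p : ℕ) (x : Fin p → ℝ) (f : (Fin p → ℝ) → ℝ) {r : ℝ} (hr : 0 < r) :
    ∫ y : Fin p → ℝ,
        (2 * π * r) ^ (-(p : ℝ) / 2) * Real.exp (-(∑ j, (x j - y j) ^ 2) / (2 * r)) * f y
      = ∫ z, stdGauss p z * f (x + √r • z) := by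
  have hsq : 0 < √r := Real.sqrt_pos.2 hr
  rw [← integral_add_left_eq_self _ x]
  have key := Measure.integral_comp_smul (volume : Measure (Fin p → ℝ))
    (fun y => (2 * π * r) ^ (-(p : ℝ) / 2) *
      Real.exp (-(∑ j, (x j - (x + y) j) ^ 2) / (2 * r)) * f (x + y)) (√r)
  rw [Module.finrank_fin_fun, abs_of_pos (by positivity), smul_eq_mul, eq_comm,
    inv_mul_eq_iff_eq_mul₀ (by positivity)] at key
  rw [key, ← MeasureTheory.integral_const_mul]
  congr 1
  ext z
  have h1 : √r ^ p * (2 * π * r) ^ (-(p : ℝ) / 2) = (2 * π) ^ (-(p : ℝ) / 2) := by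
    rw [Real.mul_rpow (by positivity) hr.le, Real.sqrt_eq_rpow, ← Real.rpow_natCast,
      ← Real.rpow_mul hr.le, mul_left_comm, ← Real.rpow_add hr,
      show 1 / 2 * (p : ℝ) + -(p : ℝ) / 2 = 0 by ring, Real.rpow_zero, mul_one]
  have h2 : -(∑ j, (x j - (x + √r • z) j) ^ 2) / (2 * r) = -(∑ j, z j ^ 2) / 2 := by
    have : ∀ j, (x j - (x + √r • z) j) ^ 2 = r * z j ^ 2 := fun j => by
      simp [mul_pow, Real.sq_sqrt hr.le]
    simp_rw [this, ← Finset.mul_sum]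
    field_simp
  rw [h2, ← mul_assoc, ← mul_assoc, h1, stdGauss]

/-- Differentiation under the integral sign for a Gaussian average along the scaling parameter. -/
lemma hasDerivAt_gauss_scale (p : ℕ) (φ : (Fin p → ℝ) → ℝ) (hφ : ContDiff ℝ 1 φ)
    (C D : ℝ) (hC : ∀ z, |φ z| ≤ C) (hD : ∀ z, ‖fderiv ℝ φ z‖ ≤ D) (x : Fin p → ℝ) (t : ℝ) :
    HasDerivAt (fun t : ℝ => ∫ z, stdGauss p z * φ (x + t • z))
      (∫ z, stdGauss p z * fderiv ℝ φ (x + t • z) z) t := by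
  have hg := continuous_stdGauss p
  have hφc := hφ.continuous
  have hdc := hφ.continuous_fderiv (by norm_num)
  refine (hasDerivAt_integral_of_dominated_loc_of_deriv_le
    (bound := fun z => stdGauss p z * ‖z‖ * D)
    (F' := fun t z => stdGauss p z * fderiv ℝ φ (x + t • z) z) Filter.univ_mem
    (.of_forall fun t => ?_) ?_ ?_ (.of_forall fun z t _ => ?_)
    ((integrable_stdGauss_mul_norm p).mul_const D) (.of_forall fun z t _ => ?_)).2
  · exact Continuous.aestronglyMeasurable (by fun_prop)
  · exact (integrable_stdGauss p).mul_bdd (c := C)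
      (Continuous.aestronglyMeasurable (by fun_prop)) (.of_forall fun z => hC _)
  · exact Continuous.aestronglyMeasurable (by fun_prop)
  · rw [norm_mul, Real.norm_of_nonneg (stdGauss_nonneg p z), mul_assoc, mul_comm ‖z‖]
    exact mul_le_mul_of_nonneg_left (((fderiv ℝ φ _).le_opNorm z).trans
      (mul_le_mul_of_nonneg_right (hD _) (norm_nonneg z))) (stdGauss_nonneg p z)
  · have h1 : HasDerivAt (fun t : ℝ => x + t • z) z t := by
      simpa using ((hasDerivAt_id t).smul_const z).const_add x
    exact ((hφ.differentiable (by norm_num) _).hasFDerivAt.comp_hasDerivAt t h1).const_mul _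

/-- Half the Laplacian of `φ`, as it appears in the statement. -/
noncomputable def halfLap (p : ℕ) (φ : (Fin p → ℝ) → ℝ) (y : Fin p → ℝ) : ℝ :=
  (1 / 2) * ∑ j, iteratedFDeriv ℝ 2 φ y (fun _ => Pi.single j 1)

lemma abs_iteratedFDeriv_two_single_le {p : ℕ} (φ : (Fin p → ℝ) → ℝ) (D : ℝ)
    (hD : ∀ y, ‖iteratedFDeriv ℝ 2 φ y‖ ≤ D) (y : Fin p → ℝ) (j : Fin p) :
    |iteratedFDeriv ℝ 2 φ y (fun _ => Pi.single j 1)| ≤ D := by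
  have := (iteratedFDeriv ℝ 2 φ y).le_opNorm (fun _ => Pi.single j 1)
  simp only [Pi.norm_single, norm_one, Finset.prod_const_one, mul_one] at this
  exact this.trans (hD y)

lemma abs_halfLap_le {p : ℕ} (φ : (Fin p → ℝ) → ℝ) (D : ℝ)
    (hD : ∀ y, ‖iteratedFDeriv ℝ 2 φ y‖ ≤ D) (y : Fin p → ℝ) :
    |halfLap p φ y| ≤ 1 / 2 * (p * D) := by
  unfold halfLap
  rw [abs_mul, abs_of_pos (by norm_num : (0 : ℝ) < 1 / 2)]
  refine mul_le_mul_of_nonneg_left ((Finset.abs_sum_le_sum_abs _ _).trans ?_) (by norm_num)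
  refine (Finset.sum_le_sum fun j _ => abs_iteratedFDeriv_two_single_le φ D hD y j).trans ?_
  simp

lemma continuous_iteratedFDeriv_two_single {p : ℕ} {φ : (Fin p → ℝ) → ℝ} (hφ : ContDiff ℝ 2 φ)
    (j : Fin p) : Continuous fun y => iteratedFDeriv ℝ 2 φ y (fun _ => Pi.single j 1) := by
  have h := hφ.continuous_iteratedFDeriv (m := 2) le_rfl
  exact (ContinuousMultilinearMap.apply ℝ (fun _ : Fin 2 => Fin p → ℝ) ℝ
    (fun _ => Pi.single j 1)).continuous.comp h

lemma continuous_halfLap {p : ℕ} {φ : (Fin p → ℝ) → ℝ} (hφ : ContDiff ℝ 2 φ) :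
    Continuous (halfLap p φ) :=
  continuous_const.mul (continuous_finsetSum _ fun j _ =>
    continuous_iteratedFDeriv_two_single hφ j)

/-- Gaussian integration by parts, summed over the coordinates:
`∫ γ(z) Dφ(x + t z) z dz = t ∫ γ(z) Δφ(x + t z) dz`. -/
lemma gauss_radial_eq_laplacian (p : ℕ) (φ : (Fin p → ℝ) → ℝ) (hφ : ContDiff ℝ 2 φ)
    (C D : ℝ) (hC : ∀ z, ‖fderiv ℝ φ z‖ ≤ C) (hD : ∀ y, ‖iteratedFDeriv ℝ 2 φ y‖ ≤ D)
    (x : Fin p → ℝ) (t : ℝ) :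
    ∫ z, stdGauss p z * fderiv ℝ φ (x + t • z) z
      = 2 * t * ∫ z, stdGauss p z * halfLap p φ (x + t • z) := by
  set ψ : Fin p → (Fin p → ℝ) → ℝ := fun j z => fderiv ℝ φ (x + t • z) (Pi.single j 1) with hψ
  have hφ1 : ContDiff ℝ 1 (fderiv ℝ φ) := hφ.fderiv_right (by norm_num)
  have hψ1 : ∀ j, ContDiff ℝ 1 (ψ j) := fun j => by
    refine ContDiff.clm_apply (hφ1.comp ?_) contDiff_const
    fun_prop
  have hder : ∀ j z, fderiv ℝ (ψ j) z (Pi.single j 1)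
      = t * iteratedFDeriv ℝ 2 φ (x + t • z) (fun _ => Pi.single j 1) := fun j z => by
    have h1 : HasFDerivAt (fun z : Fin p → ℝ => x + t • z)
        (t • ContinuousLinearMap.id ℝ (Fin p → ℝ)) z :=
      ((hasFDerivAt_id z).const_smul t).const_add x
    have h2 := ((hφ1.differentiable (by norm_num) (x + t • z)).hasFDerivAt.comp z h1).clm_apply
      (hasFDerivAt_const (Pi.single j 1 : Fin p → ℝ) z)
    have h3 : HasFDerivAt (ψ j) _ z := h2
    rw [h3.fderiv, iteratedFDeriv_two_apply]
    simp
  have hibp := fun j => gauss_ibp p j (ψ j) (hψ1 j) C (|t| * D)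
    (fun z => by
      refine ((fderiv ℝ φ (x + t • z)).le_opNorm (Pi.single j 1)).trans ?_
      simpa [Pi.norm_single] using hC (x + t • z))
    (fun z => by
      rw [hder, abs_mul]
      exact mul_le_mul_of_nonneg_left (abs_iteratedFDeriv_two_single_le φ D hD _ j)
        (abs_nonneg t))
  have hint : ∀ j, Integrable fun z => stdGauss p z *
      iteratedFDeriv ℝ 2 φ (x + t • z) (fun _ => Pi.single j 1) := fun j => by
    refine (integrable_stdGauss p).mul_bdd (c := D) ?_
      (.of_forall fun z => abs_iteratedFDeriv_two_single_le φ D hD _ j)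
    exact ((continuous_iteratedFDeriv_two_single hφ j).comp
      (by fun_prop : Continuous fun z : Fin p → ℝ => x + t • z)).aestronglyMeasurable
  have hsum : ∀ z, stdGauss p z * fderiv ℝ φ (x + t • z) z
      = ∑ j, stdGauss p z * (z j * ψ j z) := fun z => by
    rw [← Finset.mul_sum]
    congr 1
    conv_lhs => rw [pi_eq_sum_univ' z, map_sum]
    refine Finset.sum_congr rfl fun j _ => ?_
    rw [map_smul, smul_eq_mul]
    congr 2
    rw [← pi_eq_sum_univ' z]
  simp_rw [hsum]
  rw [integral_finsetSum _ fun j _ => (hibp j).1]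
  have hR : ∀ z, stdGauss p z * halfLap p φ (x + t • z) = 1 / 2 * ∑ j, stdGauss p z *
      iteratedFDeriv ℝ 2 φ (x + t • z) (fun _ => Pi.single j 1) := fun z => by
    rw [halfLap, ← Finset.mul_sum]; ring
  simp_rw [hR, MeasureTheory.integral_const_mul]
  rw [integral_finsetSum _ fun j _ => hint j, ← mul_assoc, show 2 * t * (1 / 2) = t by ring,
    Finset.mul_sum]
  refine Finset.sum_congr rfl fun j _ => ?_
  rw [(hibp j).2, ← MeasureTheory.integral_const_mul]
  congr 1
  ext z
  rw [hder]; ring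

/-- ½Δ is the infinitesimal generator of the heat semigroup:
P_s φ(x) − φ(x) = ∫₀ˢ P_r(½Δφ)(x) dr. -/
theorem stmt_11 (p : ℕ) (hp : 1 ≤ p) (φ : (Fin p → ℝ) → ℝ)
    (hφ : ContDiff ℝ 2 φ)
    (hb0 : ∃ C, ∀ y, |φ y| ≤ C)
    (hb1 : ∃ C, ∀ y, ‖fderiv ℝ φ y‖ ≤ C)
    (hb2 : ∃ C, ∀ y, ‖iteratedFDeriv ℝ 2 φ y‖ ≤ C)
    (s : ℝ) (hs : 0 < s) (x : Fin p → ℝ) :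
    (∫ y : Fin p → ℝ,
        (2 * π * s) ^ (-(p : ℝ) / 2) * Real.exp (-(∑ j, (x j - y j) ^ 2) / (2 * s)) * φ y)
      - φ x =
      ∫ r in (0 : ℝ)..s, ∫ y : Fin p → ℝ,
        (2 * π * r) ^ (-(p : ℝ) / 2) * Real.exp (-(∑ j, (x j - y j) ^ 2) / (2 * r)) *
          ((1 / 2) * ∑ j, iteratedFDeriv ℝ 2 φ y (fun _ => Pi.single j 1)) := by
  obtain ⟨C₀, hC₀⟩ := hb0
  obtain ⟨C₁, hC₁⟩ := hb1
  obtain ⟨C₂, hC₂⟩ := hb2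
  set G : ℝ → ℝ := fun t => ∫ z, stdGauss p z * φ (x + t • z) with hG
  set H : ℝ → ℝ := fun t => ∫ z, stdGauss p z * halfLap p φ (x + t • z) with hH
  have hGd : ∀ t, HasDerivAt G (2 * t * H t) t := fun t => by
    rw [hH, ← gauss_radial_eq_laplacian p φ hφ C₁ C₂ hC₁ hC₂ x t]
    exact hasDerivAt_gauss_scale p φ (hφ.of_le (by norm_num)) C₀ C₁ hC₀ hC₁ x t
  have hHc : Continuous H := by
    have hL := continuous_halfLap hφ
    have hg := continuous_stdGauss p
    refine continuous_of_dominated (bound := fun z => stdGauss p z * (1 / 2 * (p * C₂)))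
      (fun t => Continuous.aestronglyMeasurable (by fun_prop))
      (fun t => .of_forall fun z => ?_) ((integrable_stdGauss p).mul_const _)
      (.of_forall fun z => by fun_prop)
    rw [norm_mul, Real.norm_of_nonneg (stdGauss_nonneg p z)]
    exact mul_le_mul_of_nonneg_left (abs_halfLap_le φ C₂ hC₂ _) (stdGauss_nonneg p z)
  have hGc : Continuous G := continuous_iff_continuousAt.2 fun t => (hGd t).continuousAt
  have hG0 : G 0 = φ x := by
    simp [hG, MeasureTheory.integral_mul_const, integral_stdGauss]
  have hFTC : ∫ r in (0 : ℝ)..s, H (√r) = G (√s) - G (√0) := by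
    refine integral_eq_sub_of_hasDerivAt_of_le (f := fun r => G (√r))
      (f' := fun r => H (√r)) hs.le
      (hGc.comp Real.continuous_sqrt).continuousOn (fun r hr => ?_)
      ((hHc.comp Real.continuous_sqrt).intervalIntegrable 0 s)
    have hr0 : 0 < √r := Real.sqrt_pos.2 hr.1
    refine ((hGd (√r)).comp r (Real.hasDerivAt_sqrt hr.1.ne')).congr_deriv ?_
    field_simp
  rw [heat_eq_stdGauss p x φ hs, ← hG0]
  rw [Real.sqrt_zero] at hFTC
  refine hFTC.symm.trans ?_
  -- the two integrands agree on `(0, s]`; at `r = 0` the heat kernel takes a junk value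
  refine integral_congr_ae (.of_forall fun r hr => ?_)
  rw [Set.uIoc_of_le hs.le] at hr
  exact (heat_eq_stdGauss p x (halfLap p φ) hr.1).symm
end

section
/- Let t ∈ ℝ, C ≥ 0, and let h : ℝ → ℝ be continuous. Suppose that for all t₁, t₂ with t−1 ≤ t₁ ≤ t₂ ≤ t one has |h(t₂) − h(t₁)| ≤ C + C·∫_{t₁}^{t₂} |h(s)| ds. Then inf_{t−1 ≤ s ≤ t} |h(s)| ≥ |h(t)|·exp(−C) − C and sup_{t−1 ≤ s ≤ t} |h(s)| ≤ (|h(t)| + C)·exp(C). -/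
open MeasureTheory intervalIntegral

/-!
Both bounds follow from the integral form of Grönwall's inequality, `gronwall_integral_unit`.
For `s ∈ [t - 1, t]`, the increment hypothesis on `[s, s + x]` and the triangle inequality give
`|h (s + x)| ≤ (|h s| + C) + C ∫₀ˣ |h (s + y)| dy`, so `|h t| ≤ (|h s| + C) e^C`, which is the lower
bound. Running time backwards from `t`, the function `x ↦ |h (t - x)|` satisfies the analogous
inequality with `|h t| + C`, which is the upper bound.
-/

/-- Integral Grönwall inequality for a constant kernel, on an interval of length at most one. It
holds because `(A + C ∫₀ˣ u) e^{-Cx}` has nonpositive derivative. -/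
lemma gronwall_integral_unit {u : ℝ → ℝ} (hu : Continuous u) {A C L : ℝ} (hA : 0 ≤ A) (hC : 0 ≤ C)
    (hL : 0 ≤ L) (hL1 : L ≤ 1)
    (hineq : ∀ x, 0 ≤ x → x ≤ L → u x ≤ A + C * ∫ y in (0 : ℝ)..x, u y) :
    u L ≤ A * Real.exp C := by
  set G : ℝ → ℝ := fun x => (A + C * ∫ y in (0 : ℝ)..x, u y) * Real.exp (-(C * x)) with hG
  have hderiv (x : ℝ) : HasDerivAt G
      (C * u x * Real.exp (-(C * x)) +
        (A + C * ∫ y in (0 : ℝ)..x, u y) * (Real.exp (-(C * x)) * -(C * 1))) x := by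
    have h1 : HasDerivAt (fun x => ∫ y in (0 : ℝ)..x, u y) (u x) x :=
      hu.integral_hasStrictDerivAt 0 x |>.hasDerivAt
    exact ((h1.const_mul C).const_add A).mul (((hasDerivAt_id x).const_mul C).neg.exp)
  have hanti : AntitoneOn G (Set.Icc 0 L) := by
    refine antitoneOn_of_deriv_nonpos (convex_Icc 0 L)
      (fun x _ => (hderiv x).continuousAt.continuousWithinAt)
      (fun x _ => (hderiv x).differentiableAt.differentiableWithinAt) fun x hx => ?_
    rw [interior_Icc] at hx
    rw [(hderiv x).deriv]
    have h2 := mul_le_mul_of_nonneg_left (hineq x hx.1.le hx.2.le)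
      (mul_nonneg hC (Real.exp_pos (-(C * x))).le)
    linarith
  have hGL : G L ≤ A := by
    simpa [hG] using hanti (Set.left_mem_Icc.2 hL) (Set.right_mem_Icc.2 hL) hL
  calc u L ≤ A + C * ∫ y in (0 : ℝ)..L, u y := hineq L hL le_rfl
    _ = G L * Real.exp (C * L) := by
      simp only [hG]
      rw [mul_assoc, ← Real.exp_add, neg_add_cancel, Real.exp_zero, mul_one]
    _ ≤ A * Real.exp (C * L) := by gcongr
    _ ≤ A * Real.exp C := by
      gcongr
      exact mul_le_of_le_one_right hC hL1

/-- Bounds on the speed of the minimiser on [t−1, t]: a Gronwall-type estimate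
gives inf |h| ≥ |h(t)|e^{−C} − C and sup |h| ≤ (|h(t)| + C)e^{C}. -/
theorem stmt_14 (t C : ℝ) (hC : 0 ≤ C) (h : ℝ → ℝ) (hcont : Continuous h)
    (hineq : ∀ t₁ t₂ : ℝ, t - 1 ≤ t₁ → t₁ ≤ t₂ → t₂ ≤ t →
      |h t₂ - h t₁| ≤ C + C * ∫ s in t₁..t₂, |h s|) :
    (∀ s ∈ Set.Icc (t - 1) t, |h t| * Real.exp (-C) - C ≤ |h s|) ∧
    (∀ s ∈ Set.Icc (t - 1) t, |h s| ≤ (|h t| + C) * Real.exp C) := by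
  constructor
  · rintro s ⟨hs1, hs2⟩
    have key : |h (s + (t - s))| ≤ (|h s| + C) * Real.exp C := by
      refine gronwall_integral_unit (u := fun x => |h (s + x)|) (L := t - s) (by fun_prop)
        (by positivity) hC (by linarith) (by linarith) fun x hx0 hxL => ?_
      rw [intervalIntegral.integral_comp_add_left (fun y => |h y|) s, add_zero]
      have h1 := hineq s (s + x) hs1 (by linarith) (by linarith)
      have h2 := abs_sub_abs_le_abs_sub (h (s + x)) (h s)
      linarith
    rw [add_sub_cancel] at key
    have h3 := mul_le_mul_of_nonneg_right key (Real.exp_pos (-C)).le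
    rw [mul_assoc, ← Real.exp_add, add_neg_cancel, Real.exp_zero, mul_one] at h3
    linarith
  · rintro s ⟨hs1, hs2⟩
    have key : |h (t - (t - s))| ≤ (|h t| + C) * Real.exp C := by
      refine gronwall_integral_unit (u := fun x => |h (t - x)|) (L := t - s) (by fun_prop)
        (by positivity) hC (by linarith) (by linarith) fun x hx0 hxL => ?_
      rw [intervalIntegral.integral_comp_sub_left (fun y => |h y|) t, sub_zero]
      have h1 := hineq (t - x) t (by linarith) (by linarith) le_rfl
      have h2 := abs_sub_abs_le_abs_sub (h (t - x)) (h t)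
      rw [abs_sub_comm] at h2
      linarith
    rwa [sub_sub_cancel] at key
end

section
/- Let C ≥ 0 and K ≥ 0 be real numbers and suppose that (1/2)·( max(K·exp(−C) − C, 0) )² − C − C·|K·exp(−C) − C| ≤ 2π² + C + 2π·C. Then K < 10·exp(2C). -/
open Real

/-- The elementary inequality from the action comparison: if
½(max(Ke^{−C}−C, 0))² − C − C|Ke^{−C}−C| ≤ 2π² + C + 2πC then K < 10e^{2C}. -/
theorem stmt_15 (C K : ℝ) (hC : 0 ≤ C) (hK : 0 ≤ K)
    (hyp : (1 / 2) * (max (K * Real.exp (-C) - C) 0) ^ 2 - C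
        - C * |K * Real.exp (-C) - C| ≤ 2 * π ^ 2 + C + 2 * π * C) :
    K < 10 * Real.exp (2 * C) := by
  by_contra! h
  -- If `K ≥ 10 e^{2C}`, then `y = K e^{-C} - C ≥ 10 e^C - C ≥ 10 + 9C`, so `y (y / 2 - C)` is at
  -- least `(10 + 9C)(5 + 7C/2)`, which exceeds `2π² + 2C + 2πC`.
  have hexp : 10 * Real.exp C ≤ K * Real.exp (-C) := by
    have hmul := mul_le_mul_of_nonneg_right h (Real.exp_pos (-C)).le
    rwa [mul_assoc, ← Real.exp_add, show 2 * C + -C = C by ring] at hmul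
  have hy : 10 + 9 * C ≤ K * Real.exp (-C) - C := by
    linarith [Real.add_one_le_exp C]
  generalize K * Real.exp (-C) - C = y at hyp hy
  have hy0 : 0 ≤ y := by linarith
  rw [max_eq_left hy0, abs_of_nonneg hy0] at hyp
  have hπ : π < 3.15 := Real.pi_lt_d2
  have hπ_sq : π ^ 2 ≤ 3.15 ^ 2 := pow_le_pow_left₀ Real.pi_pos.le hπ.le 2
  have hπC : π * C ≤ 3.15 * C := mul_le_mul_of_nonneg_right hπ.le hC
  have hprod : (10 + 9 * C) * (5 + 7 / 2 * C) ≤ y * (y / 2 - C) :=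
    mul_le_mul hy (by linarith) (by linarith) hy0
  nlinarith [sq_nonneg C]
end
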